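/- Let omega_1, omega_2 be R-linearly independent complex numbers and k a positive integer. Set Lambda' = Z(k omega_1) + Z(k omega_2) and Lambda = Z omega_1 + Z(k omega_2). Then for every omega in C not in Lambda, sum_{l=0}^{k-1} wp_{Lambda'}(omega + l omega_1) = wp_{Lambda}(omega) + sum_{l=1}^{k-1} wp_{Lambda'}(l omega_1). -/

import Mathlib

open scoped BigOperators

namespace WeierstrassElliptic

/-- The lattice `ℤω₁ + ℤω₂ ⊆ ℂ`. -/
def latticeSet (ω₁ ω₂ : ℂ) : Set ℂ :=
  {z | ∃ m n : ℤ, z = (m : ℂ) * ω₁ + (n : ℂ) * ω₂}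

/-- The point of the lattice indexed by `p ∈ ℤ × ℤ`. -/
def latPt (ω₁ ω₂ : ℂ) (p : ℤ × ℤ) : ℂ := (p.1 : ℂ) * ω₁ + (p.2 : ℂ) * ω₂

/-- The Weierstrass `℘`-function of the lattice `ℤω₁ + ℤω₂`:
`℘(z) = z⁻² + ∑_{λ ∈ Λ, λ ≠ 0} ((z+λ)⁻² - λ⁻²)`. -/
noncomputable def wp (ω₁ ω₂ : ℂ) (z : ℂ) : ℂ :=
  (z ^ 2)⁻¹ + ∑' p : ℤ × ℤ,
    if p = 0 then 0
    else ((z + latPt ω₁ ω₂ p) ^ 2)⁻¹ - ((latPt ω₁ ω₂ p) ^ 2)⁻¹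

/-- The invariant `g₂ = 60 ∑_{λ ∈ Λ, λ ≠ 0} λ⁻⁴`. -/
noncomputable def g2 (ω₁ ω₂ : ℂ) : ℂ :=
  60 * ∑' p : ℤ × ℤ, if p = 0 then 0 else ((latPt ω₁ ω₂ p) ^ 4)⁻¹

/-- The invariant `g₃ = 140 ∑_{λ ∈ Λ, λ ≠ 0} λ⁻⁶`. -/
noncomputable def g3 (ω₁ ω₂ : ℂ) : ℂ :=
  140 * ∑' p : ℤ × ℤ, if p = 0 then 0 else ((latPt ω₁ ω₂ p) ^ 6)⁻¹

/-- The Weierstrass `ζ`-function: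
`ζ(z) = z⁻¹ + ∑_{λ ∈ Λ, λ ≠ 0} ((z-λ)⁻¹ + λ⁻¹ + z λ⁻²)`. -/
noncomputable def wzeta (ω₁ ω₂ : ℂ) (z : ℂ) : ℂ :=
  z⁻¹ + ∑' p : ℤ × ℤ,
    if p = 0 then 0
    else (z - latPt ω₁ ω₂ p)⁻¹ + (latPt ω₁ ω₂ p)⁻¹ + z * ((latPt ω₁ ω₂ p) ^ 2)⁻¹

/-- A function `c : (0,1) → ℂ` (defined on all of `ℝ`, but only its restriction to `(0,1)`
matters) is algebraic over `ℂ(t)` if there is a nonzero polynomial `P ∈ ℂ[T,Z]` with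
`P(t, c(t)) = 0` for all `t ∈ (0,1)`.  Here `T = X 0` and `Z = X 1`. -/
def AlgebraicOverCt (c : ℝ → ℂ) : Prop :=
  ∃ P : MvPolynomial (Fin 2) ℂ, P ≠ 0 ∧
    ∀ t ∈ Set.Ioo (0 : ℝ) 1, MvPolynomial.eval ![(t : ℂ), c t] P = 0

/-- Membership in the set `X`: `b : (0,1) → ℂ` is such that for every `t`, either `b(t)`
lies in the lattice `Λ(t)` (a pole of `℘`), or `t ↦ ℘(b(t),t)` is algebraic over `ℂ(t)`. -/
def MemX (ω₁ ω₂ b : ℝ → ℂ) : Prop :=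
  ∀ t ∈ Set.Ioo (0 : ℝ) 1,
    b t ∈ latticeSet (ω₁ t) (ω₂ t) ∨
      AlgebraicOverCt (fun s => wp (ω₁ s) (ω₂ s) (b s))

end WeierstrassElliptic

/-!
Because `℘_Λ z = ∑_{λ ∈ Λ} ((z + λ)⁻² - λ⁻²)` converges absolutely, it may be summed coset by coset
along a sublattice `Λ'` of finite index. The coset `r + Λ'` contributes
`∑_{μ ∈ Λ'} ((z + r + μ)⁻² - (r + μ)⁻²) = ℘_Λ' (z + r) - ℘_Λ' r`. For `Λ = ℤω₁ + ℤω₂` and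
`Λ' = ℤ(kω₁) + ℤω₂` the representatives are `r = lω₁` with `0 ≤ l < k`.

In Lean `0⁻¹ = 0`, so the term `λ = 0` of the series is `z⁻²`, and `℘_Λ' 0 = 0`: both sums may
thus be taken without excluding `0`.
-/

namespace WeierstrassElliptic

section

variable {ω₁ ω₂ : ℂ}

lemma hasSum_weierstrassP_latPt (L : PeriodPair) (z : ℂ) :
    HasSum (fun p ↦ ((z + latPt L.ω₁ L.ω₂ p) ^ 2)⁻¹ - (latPt L.ω₁ L.ω₂ p ^ 2)⁻¹)
      (L.weierstrassP z) := by
  -- `PeriodPair.weierstrassP` sums over `z - λ`, whereas `wp` sums over `z + λ`.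
  let indexEquiv : ℤ × ℤ ≃ L.lattice :=
    (Equiv.neg (ℤ × ℤ)).trans L.latticeEquivProd.symm.toEquiv
  have coe_indexEquiv (p : ℤ × ℤ) : (indexEquiv p : ℂ) = -latPt L.ω₁ L.ω₂ p := by
    refine (L.latticeEquiv_symm_apply (-p)).trans ?_
    simp only [latPt, Prod.fst_neg, Prod.snd_neg]
    push_cast
    ring
  refine (indexEquiv.hasSum_iff.mpr (L.hasSum_weierstrassP z)).congr_fun fun p ↦ ?_
  simp only [Function.comp_apply, coe_indexEquiv, sub_neg_eq_add, neg_sq, one_div]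

lemma wp_eq_weierstrassP (L : PeriodPair) (z : ℂ) : wp L.ω₁ L.ω₂ z = L.weierstrassP z := by
  have series := hasSum_weierstrassP_latPt L z
  rw [← series.tsum_eq, series.summable.tsum_eq_add_tsum_ite 0, wp]
  simp [latPt]

lemma hasSum_wp (h : LinearIndependent ℝ ![ω₁, ω₂]) (z : ℂ) :
    HasSum (fun p ↦ ((z + latPt ω₁ ω₂ p) ^ 2)⁻¹ - (latPt ω₁ ω₂ p ^ 2)⁻¹) (wp ω₁ ω₂ z) :=
  wp_eq_weierstrassP ⟨ω₁, ω₂, h⟩ z ▸ hasSum_weierstrassP_latPt ⟨ω₁, ω₂, h⟩ z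

lemma hasSum_wp_sub_wp (h : LinearIndependent ℝ ![ω₁, ω₂]) (z w : ℂ) :
    HasSum (fun p ↦ ((z + latPt ω₁ ω₂ p) ^ 2)⁻¹ - ((w + latPt ω₁ ω₂ p) ^ 2)⁻¹)
      (wp ω₁ ω₂ z - wp ω₁ ω₂ w) := by
  simpa only [sub_sub_sub_cancel_right] using (hasSum_wp h z).sub (hasSum_wp h w)

lemma wp_zero (ω₁ ω₂ : ℂ) : wp ω₁ ω₂ 0 = 0 := by
  simp [wp]

/-- Division with remainder by `k` in the first coordinate: `(l, (m, n)) ↦ (m * k + l, n)`.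
In terms of lattice points, it splits `ℤω₁ + ℤω₂` into the cosets
`lω₁ + (ℤ(kω₁) + ℤω₂)` for `0 ≤ l < k`. -/
def cosetEquiv (k : ℕ) [NeZero k] : Fin k × ℤ × ℤ ≃ ℤ × ℤ :=
  (Equiv.prodAssoc (Fin k) ℤ ℤ).symm.trans <|
    Equiv.prodCongr ((Equiv.prodComm (Fin k) ℤ).trans (Int.divModEquiv k).symm) (Equiv.refl ℤ)

lemma cosetEquiv_apply (k : ℕ) [NeZero k] (l : Fin k) (p : ℤ × ℤ) :
    cosetEquiv k (l, p) = (p.1 * k + (l : ℕ), p.2) :=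
  rfl

lemma latPt_cosetEquiv (ω₁ ω₂ : ℂ) (k : ℕ) [NeZero k] (l : Fin k) (p : ℤ × ℤ) :
    latPt ω₁ ω₂ (cosetEquiv k (l, p)) = (l : ℕ) * ω₁ + latPt (k * ω₁) ω₂ p := by
  rw [cosetEquiv_apply, latPt, latPt]
  push_cast
  ring

lemma linearIndependent_natCast_mul (h : LinearIndependent ℝ ![ω₁, ω₂]) {m n : ℕ}
    (hm : m ≠ 0) (hn : n ≠ 0) : LinearIndependent ℝ ![(m : ℂ) * ω₁, (n : ℂ) * ω₂] := by
  have hm' : IsUnit (m : ℝ) := (Nat.cast_ne_zero.mpr hm).isUnit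
  have hn' : IsUnit (n : ℝ) := (Nat.cast_ne_zero.mpr hn).isUnit
  simpa using (LinearIndependent.pair_smul_smul_iff hm' hn').mpr h

lemma wp_eq_sum_wp_sub_wp (h : LinearIndependent ℝ ![ω₁, ω₂]) (k : ℕ) [NeZero k] (z : ℂ) :
    wp ω₁ ω₂ z =
      ∑ l ∈ Finset.range k, (wp (k * ω₁) ω₂ (z + l * ω₁) - wp (k * ω₁) ω₂ (l * ω₁)) := by
  have h' : LinearIndependent ℝ ![(k : ℂ) * ω₁, ω₂] := by
    simpa using linearIndependent_natCast_mul h (NeZero.ne k) one_ne_zero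
  have coset_sum (l : Fin k) := hasSum_wp_sub_wp h' (z + (l : ℕ) * ω₁) ((l : ℕ) * ω₁)
  simp only [add_assoc, ← latPt_cosetEquiv] at coset_sum
  rw [← Fin.sum_univ_eq_sum_range
    (fun l ↦ wp (k * ω₁) ω₂ (z + l * ω₁) - wp (k * ω₁) ω₂ (l * ω₁))]
  exact (((cosetEquiv k).hasSum_iff.mpr (hasSum_wp h z)).prod_fiberwise coset_sum).unique
    (hasSum_fintype _)

lemma sum_range_wp_mul_eq_sum_Ico {k : ℕ} (hk : 1 ≤ k) (ω₁ ω₂ w : ℂ) :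
    ∑ l ∈ Finset.range k, wp ω₁ ω₂ (l * w) = ∑ l ∈ Finset.Ico 1 k, wp ω₁ ω₂ (l * w) := by
  rw [Finset.range_eq_Ico, Finset.sum_eq_sum_Ico_succ_bot hk, Nat.cast_zero, zero_mul, wp_zero,
    zero_add]

end

/-- Let `ω₁, ω₂` be `ℝ`-linearly independent and `k ≥ 1`.  With
`Λ' = ℤ(kω₁) + ℤ(kω₂)` and `Λ = ℤω₁ + ℤ(kω₂)`, for every `ω ∉ Λ`:
`∑_{l=0}^{k-1} ℘_{Λ'}(ω + lω₁) = ℘_Λ(ω) + ∑_{l=1}^{k-1} ℘_{Λ'}(lω₁)`. -/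
theorem statement10 (ω₁ ω₂ : ℂ) (h : LinearIndependent ℝ ![ω₁, ω₂]) (k : ℕ)
    (hk : 1 ≤ k) :
    ∀ ω : ℂ, ω ∉ latticeSet ω₁ ((k : ℂ) * ω₂) →
      ∑ l ∈ Finset.range k, wp ((k : ℂ) * ω₁) ((k : ℂ) * ω₂) (ω + (l : ℂ) * ω₁) =
        wp ω₁ ((k : ℂ) * ω₂) ω +
          ∑ l ∈ Finset.Ico 1 k, wp ((k : ℂ) * ω₁) ((k : ℂ) * ω₂) ((l : ℂ) * ω₁) := by
  intro ω _
  have : NeZero k := ⟨Nat.one_le_iff_ne_zero.mp hk⟩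
  have h' : LinearIndependent ℝ ![ω₁, (k : ℂ) * ω₂] := by
    simpa using linearIndependent_natCast_mul h one_ne_zero (NeZero.ne k)
  rw [wp_eq_sum_wp_sub_wp h' k ω, ← sum_range_wp_mul_eq_sum_Ico hk, Finset.sum_sub_distrib,
    sub_add_cancel]

end WeierstrassElliptic
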